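/- arXiv:1006.1784 — 6 statements merged into one kernel-verified Lean document; each statement's English description precedes it below -/
import Mathlib

section
/- Let P be a pure simplicial complex of dimension d whose vertex set is exactly {1,...,v} (every element of {1,...,v} is a vertex of P), and let k be a natural number. Set n = v + k and M = n − d − 1. Then there exists a unique fundamental set E of type (M, n, k) of subsets of {1,...,n} whose associated complex equals P, where P is regarded as a simplicial complex on {1,...,n} in which the elements v+1,...,n are not vertices. -/
/-! The members of `E` must be exactly the complements of the facets of `P`. For uniqueness,
if `E` is fundamental of type `(M, n)` with associated complex `P`, then `Q ∈ E` if and only if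
`Q` is an `M`-subset of the ground set whose complement is a face of `P`: an acceptable
`M`-set contains a member of `E` of the same cardinality, hence is itself one
(`mem_iff_compl_mem_assocComplex`). For existence, take the complements of the faces with `d + 1`
elements. Since `P` is pure, every face lies in such a face (`exists_superset_card_eq`), so the
associated complex is `P`; moreover the union of these faces is the whole vertex set, so the
indispensable elements are precisely the `k` non-vertices. -/

open Classical

/-- `E` is a fundamental set of type `(M, n)`: a nonempty family of subsets of the
ground set `{0, …, n-1}` (our encoding of `{1, …, n}`), each of cardinality `M`. -/
def IsFundamentalSet (M n : ℕ) (E : Finset (Finset ℕ)) : Prop :=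
  E.Nonempty ∧ ∀ P ∈ E, P ⊆ Finset.range n ∧ P.card = M

/-- A subset of the ground set `{0, …, n-1}` is acceptable if it contains a member of `E`. -/
def Acceptable (E : Finset (Finset ℕ)) (A : Finset ℕ) : Prop :=
  ∃ P ∈ E, P ⊆ A

/-- The associated complex of `E`: all subsets of the ground set `{0, …, n-1}` whose
complement in the ground set is acceptable. -/
def AssocComplex (n : ℕ) (E : Finset (Finset ℕ)) : Set (Finset ℕ) :=
  {σ | σ ⊆ Finset.range n ∧ Acceptable E (Finset.range n \ σ)}

/-- Facets: the maximal faces of the associated complex. -/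
def IsFacet (n : ℕ) (E : Finset (Finset ℕ)) (σ : Finset ℕ) : Prop :=
  σ ∈ AssocComplex n E ∧ ∀ τ ∈ AssocComplex n E, σ ⊆ τ → τ = σ

/-- Facets (maximal faces) of an abstract simplicial complex given as a finite family. -/
def IsFacetOf (P : Finset (Finset ℕ)) (σ : Finset ℕ) : Prop :=
  σ ∈ P ∧ ∀ τ ∈ P, σ ⊆ τ → τ = σ

/-- The SEU (Substitute's Existence and Uniqueness) property. -/
def SEU (n : ℕ) (E : Finset (Finset ℕ)) : Prop :=
  ∀ P ∈ E, ∀ k ∈ Finset.range n, ∃! k', k' ∈ P ∧ (P \ {k'}) ∪ {k} ∈ E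

/-- `E` is minimal for the SEU property: it satisfies SEU and no proper nonempty
subfamily satisfies SEU. -/
def MinimalSEU (n : ℕ) (E : Finset (Finset ℕ)) : Prop :=
  SEU n E ∧ ∀ E' : Finset (Finset ℕ), E' ⊂ E → E'.Nonempty → ¬ SEU n E'

/-- Ridges of the associated complex of a fundamental set of type `(M, n)`:
faces of cardinality `n - M - 1`. -/
def IsRidge (M n : ℕ) (E : Finset (Finset ℕ)) (Q : Finset ℕ) : Prop :=
  Q ∈ AssocComplex n E ∧ Q.card + 1 = n - M

/-- In a pure complex of dimension `d`, each face extends to a face with `d + 1` elements. -/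
lemma exists_superset_card_eq {d : ℕ} {P : Finset (Finset ℕ)}
    (hpure : ∀ σ, IsFacetOf P σ → σ.card = d + 1) {σ : Finset ℕ} (hσ : σ ∈ P) :
    ∃ τ ∈ P, σ ⊆ τ ∧ τ.card = d + 1 := by
  obtain ⟨τ, hστ, hτ⟩ := P.exists_le_maximal hσ
  exact ⟨τ, hτ.prop, hστ, hpure τ ⟨hτ.prop, fun ρ hρ h => (hτ.eq_of_le hρ h).symm⟩⟩

/-- A fundamental set is determined by its type and its associated complex. -/
lemma mem_iff_compl_mem_assocComplex {M n : ℕ} {E : Finset (Finset ℕ)}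
    (hE : IsFundamentalSet M n E) (Q : Finset ℕ) :
    Q ∈ E ↔ Q ⊆ Finset.range n ∧ Q.card = M ∧ Finset.range n \ Q ∈ AssocComplex n E := by
  constructor
  · intro hQ
    obtain ⟨hQn, hQM⟩ := hE.2 Q hQ
    refine ⟨hQn, hQM, Finset.sdiff_subset, Q, hQ, ?_⟩
    rw [Finset.sdiff_sdiff_eq_self hQn]
  · rintro ⟨hQn, hQM, -, R, hR, hRQ⟩
    rw [Finset.sdiff_sdiff_eq_self hQn] at hRQ
    have : R = Q := Finset.eq_of_subset_of_card_le hRQ (by rw [(hE.2 R hR).2, hQM])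
    exact this ▸ hR

/-- Let `P` be a pure simplicial complex of dimension `d` whose vertex set
is exactly `{0, …, v-1}` (our encoding of `{1, …, v}`), and let `k` be a natural number.
Set `n = v + k` and `M = n - d - 1`.  Then there exists a unique fundamental set `E` of type
`(M, n, k)` of subsets of `{0, …, n-1}` whose associated complex equals `P`, where `P` is
regarded as a simplicial complex on `{0, …, n-1}` in which the elements `v, …, n-1` are
not vertices. -/
theorem statement1 (v d k : ℕ) (P : Finset (Finset ℕ))
    (hne : P.Nonempty)
    (hsub : ∀ σ ∈ P, σ ⊆ Finset.range v)
    (hdc : ∀ σ ∈ P, ∀ τ ⊆ σ, τ ∈ P)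
    (hvert : ∀ j, ({j} : Finset ℕ) ∈ P ↔ j ∈ Finset.range v)
    (hpure : ∀ σ, IsFacetOf P σ → σ.card = d + 1) :
    ∃! E : Finset (Finset ℕ),
      IsFundamentalSet (v + k - d - 1) (v + k) E ∧
      ((Finset.range (v + k)).filter fun j => ∀ Q ∈ E, j ∈ Q).card = k ∧
      ∀ σ, σ ∈ AssocComplex (v + k) E ↔ σ ∈ P := by
  have hsub' : ∀ σ ∈ P, σ ⊆ Finset.range (v + k) := fun σ hσ =>
    (hsub σ hσ).trans (Finset.range_mono (Nat.le_add_right v k))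
  refine existsUnique_of_exists_of_unique ?_ ?_
  · refine ⟨(P.filter fun τ => τ.card = d + 1).image fun τ => Finset.range (v + k) \ τ,
      ⟨?_, ?_⟩, ?_, ?_⟩
    · obtain ⟨σ, hσ⟩ := hne
      obtain ⟨τ, hτ, -, hc⟩ := exists_superset_card_eq hpure hσ
      exact ⟨_, Finset.mem_image_of_mem _ (Finset.mem_filter.2 ⟨hτ, hc⟩)⟩
    · intro Q hQ
      obtain ⟨τ, hτ, rfl⟩ := Finset.mem_image.1 hQ
      obtain ⟨hτ, hc⟩ := Finset.mem_filter.1 hτ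
      refine ⟨Finset.sdiff_subset, ?_⟩
      rw [Finset.card_sdiff_of_subset (hsub' τ hτ), Finset.card_range, hc, Nat.sub_sub]
    · have hI : ((Finset.range (v + k)).filter fun j =>
          ∀ Q ∈ (P.filter fun τ => τ.card = d + 1).image fun τ => Finset.range (v + k) \ τ,
            j ∈ Q) = Finset.Ico v (v + k) := by
        ext j
        simp only [Finset.mem_filter, Finset.mem_Ico, Finset.mem_range]
        constructor
        · rintro ⟨hj, h⟩
          refine ⟨?_, hj⟩
          by_contra! hjv
          -- A vertex lies in some facet, so it is missing from that facet's complement.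
          obtain ⟨τ, hτ, hjτ, hc⟩ :=
            exists_superset_card_eq hpure ((hvert j).2 (Finset.mem_range.2 hjv))
          have := h _ (Finset.mem_image_of_mem _ (Finset.mem_filter.2 ⟨hτ, hc⟩))
          exact (Finset.mem_sdiff.1 this).2 (Finset.singleton_subset_iff.1 hjτ)
        · rintro ⟨hvj, hj⟩
          refine ⟨hj, fun Q hQ => ?_⟩
          obtain ⟨τ, hτ, rfl⟩ := Finset.mem_image.1 hQ
          refine Finset.mem_sdiff.2 ⟨Finset.mem_range.2 hj, fun hjτ => ?_⟩
          have := Finset.mem_range.1 (hsub τ (Finset.mem_filter.1 hτ).1 hjτ)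
          omega
      rw [hI, Nat.card_Ico, Nat.add_sub_cancel_left]
    · intro σ
      constructor
      · rintro ⟨hσ, Q, hQ, hQσ⟩
        obtain ⟨τ, hτ, rfl⟩ := Finset.mem_image.1 hQ
        refine hdc τ (Finset.mem_filter.1 hτ).1 σ fun x hx => ?_
        by_contra hxτ
        exact (Finset.mem_sdiff.1 (hQσ (Finset.mem_sdiff.2 ⟨hσ hx, hxτ⟩))).2 hx
      · intro hσ
        obtain ⟨τ, hτ, hστ, hc⟩ := exists_superset_card_eq hpure hσ
        exact ⟨hsub' σ hσ, _, Finset.mem_image_of_mem _ (Finset.mem_filter.2 ⟨hτ, hc⟩),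
          Finset.sdiff_subset_sdiff (Finset.Subset.refl _) hστ⟩
  · rintro E₁ E₂ ⟨hF₁, -, h₁⟩ ⟨hF₂, -, h₂⟩
    ext Q
    rw [mem_iff_compl_mem_assocComplex hF₁, mem_iff_compl_mem_assocComplex hF₂, h₁, h₂]
end

section
/- Let E be a fundamental set of type (M,n) with associated complex P, and let P_max denote the set of facets of P. Then E satisfies the SEU property if and only if: for every facet Q ∈ P_max and every k ∈ {1,...,n}, there exists a unique k' ∉ Q such that (Q ∪ {k'}) \ {k} ∈ P_max. -/
/-!
Since all members of `E` have the same cardinality, no member contains another, so the facets of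
the associated complex are exactly the complements of the members of `E`
(`isFacet_iff_sdiff_mem`). Complementation turns the exchange `(P \ {k'}) ∪ {k}` into
`(Q ∪ {k'}) \ {k}` (`sdiff_exchange`), and hence turns the SEU property into the stated condition
on facets.
-/

open Classical

theorem isFacet_iff_sdiff_mem {M n : ℕ} {E : Finset (Finset ℕ)} (hE : IsFundamentalSet M n E)
    (σ : Finset ℕ) :
    IsFacet n E σ ↔ σ ⊆ Finset.range n ∧ Finset.range n \ σ ∈ E := by
  constructor
  · rintro ⟨⟨hσ, P, hP, hPσ⟩, hmax⟩
    have hPn := (hE.2 P hP).1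
    have hPP : Finset.range n \ (Finset.range n \ P) = P := Finset.sdiff_sdiff_eq_self hPn
    -- The complement of `P` is a face containing `σ`, so it is `σ` by maximality.
    have h := hmax (Finset.range n \ P) ⟨Finset.sdiff_subset, P, hP, hPP.ge⟩
      (fun x hx => Finset.mem_sdiff.2
        ⟨hσ hx, fun hxP => (Finset.mem_sdiff.1 (hPσ hxP)).2 hx⟩)
    exact ⟨hσ, by rwa [← h, hPP]⟩
  · rintro ⟨hσ, hmem⟩
    refine ⟨⟨hσ, _, hmem, subset_rfl⟩, ?_⟩
    rintro τ ⟨hτ, P, hP, hPτ⟩ hστ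
    have hsub : Finset.range n \ τ ⊆ Finset.range n \ σ := Finset.sdiff_subset_sdiff subset_rfl hστ
    have hPeq : P = Finset.range n \ σ :=
      Finset.eq_of_subset_of_card_le (hPτ.trans hsub) (by rw [(hE.2 _ hmem).2, (hE.2 _ hP).2])
    have heq : Finset.range n \ τ = Finset.range n \ σ := hsub.antisymm (hPeq ▸ hPτ)
    rw [← Finset.sdiff_sdiff_eq_self hτ, heq, Finset.sdiff_sdiff_eq_self hσ]

theorem sdiff_exchange {R Q : Finset ℕ} {k : ℕ} (hk : k ∈ R) (k' : ℕ) :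
    R \ ((Q ∪ {k'}) \ {k}) = ((R \ Q) \ {k'}) ∪ {k} := by
  ext x
  simp only [Finset.mem_sdiff, Finset.mem_union, Finset.mem_singleton]
  by_cases hx : x = k
  · subst hx; simp [hk]
  · tauto

/-- For a subset `Q` of the ground set, the valid exchanges at `Q` for the facet condition are
the valid exchanges at the complement of `Q` for the SEU property. In particular a `k'` outside
the ground set is never valid: as `k' ≠ k`, it would remain in the exchanged set. -/
theorem facet_exchange_iff {M n : ℕ} {E : Finset (Finset ℕ)} (hE : IsFundamentalSet M n E)
    {Q : Finset ℕ} (hQ : Q ⊆ Finset.range n) {k : ℕ} (hk : k ∈ Finset.range n) (k' : ℕ) :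
    (k' ∉ Q ∧ IsFacet n E ((Q ∪ {k'}) \ {k})) ↔
      (k' ∈ Finset.range n \ Q ∧ ((Finset.range n \ Q) \ {k'}) ∪ {k} ∈ E) := by
  rw [isFacet_iff_sdiff_mem hE, sdiff_exchange hk, Finset.mem_sdiff]
  constructor
  · rintro ⟨hk'Q, hsub, hmem⟩
    refine ⟨⟨?_, hk'Q⟩, hmem⟩
    by_cases h : k' = k
    · exact h ▸ hk
    · exact hsub (by simp [h])
  · rintro ⟨⟨hk', hk'Q⟩, hmem⟩
    exact ⟨hk'Q, Finset.sdiff_subset.trans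
      (Finset.union_subset hQ (Finset.singleton_subset_iff.2 hk')), hmem⟩

/-- Let `E` be a fundamental set of type `(M, n)` with associated
complex `P`.  Then `E` satisfies the SEU property if and only if for every facet `Q`
of the associated complex and every `k` in the ground set there exists a unique
`k' ∉ Q` such that `(Q ∪ {k'}) \ {k}` is again a facet. -/
theorem statement2 (M n : ℕ) (E : Finset (Finset ℕ))
    (hE : IsFundamentalSet M n E) :
    SEU n E ↔
      ∀ Q, IsFacet n E Q → ∀ k ∈ Finset.range n,
        ∃! k', k' ∉ Q ∧ IsFacet n E ((Q ∪ {k'}) \ {k}) := by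
  constructor
  · intro h Q hQ k hk
    obtain ⟨hQn, hQE⟩ := (isFacet_iff_sdiff_mem hE Q).1 hQ
    exact (existsUnique_congr (facet_exchange_iff hE hQn hk)).2 (h _ hQE k hk)
  · intro h P hP k hk
    have hPP : Finset.range n \ (Finset.range n \ P) = P :=
      Finset.sdiff_sdiff_eq_self (hE.2 P hP).1
    have hsub : Finset.range n \ P ⊆ Finset.range n := Finset.sdiff_subset
    have hF : IsFacet n E (Finset.range n \ P) :=
      (isFacet_iff_sdiff_mem hE _).2 ⟨hsub, hPP.symm ▸ hP⟩
    have h' := (existsUnique_congr (facet_exchange_iff hE hsub hk)).1 (h _ hF k hk)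
    rwa [hPP] at h'
end

section
/- Let E be a fundamental set of type (M,n) which satisfies the SEU property. Then there exist a positive integer p and fundamental sets E_1,...,E_p of type (M,n), each minimal for the SEU property, such that E is the disjoint union of E_1,...,E_p. -/
/-!
The key point is that SEU passes to complements: if `E' ⊆ E` both satisfy SEU, so does `E \ E'`.
Indeed, substitution is reversible: if the substitution of `k` for `k'` led from `P ∈ E \ E'` to
some `Q ∈ E'`, then the substitution of `k'` in `Q` inside `E'` would, by uniqueness in `E`, have
to lead back to `P`, forcing `P ∈ E'` (`SEU.sdiff`). One can therefore split off an
inclusion-minimal nonempty SEU subfamily and recurse on the rest (`exists_minimal_partition`).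
-/

open Classical

/-- The complement of an SEU subfamily inside an SEU family is SEU. -/
theorem SEU.sdiff {M n : ℕ} {E E' : Finset (Finset ℕ)}
    (hE : ∀ P ∈ E, P ⊆ Finset.range n ∧ P.card = M) (hsub : E' ⊆ E)
    (h : SEU n E) (h' : SEU n E') : SEU n (E \ E') := by
  intro P hP k hk
  obtain ⟨hPE, hPE'⟩ := Finset.mem_sdiff.1 hP
  obtain ⟨k', ⟨hk'P, hQE⟩, huniq⟩ := h P hPE k hk
  refine ⟨k', ⟨hk'P, Finset.mem_sdiff.2 ⟨hQE, fun hQ => hPE' ?_⟩⟩,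
    fun y hy => huniq y ⟨hy.1, (Finset.mem_sdiff.1 hy.2).1⟩⟩
  by_cases hkk : k = k'
  · have : (P \ {k'}) ∪ {k} = P := by
      ext x; simp only [Finset.mem_union, Finset.mem_sdiff, Finset.mem_singleton]; grind
    rwa [this] at hQ
  -- Otherwise `k ∉ P`, since the substitution preserves the cardinality `M`.
  have hkP : k ∉ P := by
    intro hkP
    have hQP : (P \ {k'}) ∪ {k} = P.erase k' := by
      ext x; simp only [Finset.mem_union, Finset.mem_sdiff, Finset.mem_singleton,
        Finset.mem_erase]; grind
    have h1 := (hE _ hQE).2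
    rw [hQP] at h1
    have h2 := Finset.card_erase_lt_of_mem hk'P
    have h3 := (hE P hPE).2
    omega
  have hback : (((P \ {k'}) ∪ {k}) \ {k}) ∪ {k'} = P := by
    ext x; simp only [Finset.mem_union, Finset.mem_sdiff, Finset.mem_singleton]; grind
  have hk'n : k' ∈ Finset.range n := (hE P hPE).1 hk'P
  obtain ⟨j, ⟨hjQ, hjE'⟩, -⟩ := h' _ hQ k' hk'n
  -- Both `j` and `k` are exchanged for `k'` in `E`, so they agree.
  have hjk : j = k := (h _ hQE k' hk'n).unique ⟨hjQ, hsub hjE'⟩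
    ⟨by simp, by rwa [hback]⟩
  rwa [hjk, hback] at hjE'

/-- The decomposition, with the parts indexed by a finite set of families. Empty `E` is allowed
(with no parts), so that the recursion needs no separate final case. -/
theorem exists_minimal_partition {M n : ℕ} (E : Finset (Finset ℕ))
    (hE : ∀ P ∈ E, P ⊆ Finset.range n ∧ P.card = M) (h : SEU n E) :
    ∃ F : Finset (Finset (Finset ℕ)),
      (∀ A ∈ F, IsFundamentalSet M n A ∧ MinimalSEU n A) ∧
      (∀ A ∈ F, ∀ B ∈ F, A ≠ B → Disjoint A B) ∧ E = F.biUnion id := by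
  induction E using Finset.strongInduction with
  | H E ih =>
    rcases E.eq_empty_or_nonempty with rfl | hne
    · exact ⟨∅, by simp⟩
    obtain ⟨A, hAE, hA⟩ := exists_minimal_le_of_wellFoundedLT
      (fun A : Finset (Finset ℕ) => A.Nonempty ∧ SEU n A) E ⟨hne, h⟩
    have hAsub : A ⊆ E := hAE
    obtain ⟨F, hF, hdisj, hun⟩ := ih (E \ A) (Finset.sdiff_ssubset hAsub hA.prop.1)
      (fun P hP => hE P (Finset.mem_sdiff.1 hP).1) (h.sdiff hE hAsub hA.prop.2)
    have hAF : ∀ B ∈ F, Disjoint A B := fun B hB =>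
      Finset.disjoint_of_subset_right (hun ▸ Finset.subset_biUnion_of_mem id hB)
        Finset.disjoint_sdiff
    refine ⟨insert A F, ?_, ?_, ?_⟩
    · intro B hB
      rcases Finset.mem_insert.1 hB with rfl | hB
      · exact ⟨⟨hA.prop.1, fun P hP => hE P (hAsub hP)⟩, hA.prop.2,
          fun E' hE' hne' hseu' => hA.not_prop_of_lt hE' ⟨hne', hseu'⟩⟩
      · exact hF B hB
    · intro B hB B' hB' hBB'
      rcases Finset.mem_insert.1 hB with hBA | hBF <;>
        rcases Finset.mem_insert.1 hB' with hBA' | hBF'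
      · exact absurd (hBA.trans hBA'.symm) hBB'
      · exact hBA ▸ hAF _ hBF'
      · exact hBA' ▸ (hAF _ hBF).symm
      · exact hdisj _ hBF _ hBF' hBB'
    · rw [Finset.biUnion_insert, ← hun, id, Finset.union_sdiff_of_subset hAsub]

/-- Let `E` be a fundamental set of type `(M, n)` which satisfies the SEU
property.  Then there exist a positive integer `p` and fundamental sets `E_1, …, E_p` of
type `(M, n)`, each minimal for the SEU property, such that `E` is their disjoint union. -/
theorem statement4 (M n : ℕ) (E : Finset (Finset ℕ))
    (hE : IsFundamentalSet M n E) (hseu : SEU n E) :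
    ∃ p : ℕ, 0 < p ∧ ∃ C : Fin p → Finset (Finset ℕ),
      (∀ i, IsFundamentalSet M n (C i) ∧ MinimalSEU n (C i)) ∧
      (∀ i j, i ≠ j → Disjoint (C i) (C j)) ∧
      E = Finset.univ.biUnion C := by
  obtain ⟨F, hF, hdisj, hun⟩ := exists_minimal_partition E hE.2 hseu
  refine ⟨F.card, ?_, fun i => (F.equivFin.symm i : Finset (Finset ℕ)),
    fun i => hF _ (F.equivFin.symm i).2, fun i j hij => ?_, ?_⟩
  · rw [Finset.card_pos, Finset.nonempty_iff_ne_empty]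
    rintro rfl
    exact hE.1.ne_empty (by simpa using hun)
  · exact hdisj _ (F.equivFin.symm i).2 _ (F.equivFin.symm j).2
      fun heq => hij (F.equivFin.symm.injective (Subtype.ext heq))
  · ext P
    rw [hun]
    simp only [Finset.mem_biUnion, Finset.mem_univ, true_and, id]
    constructor
    · rintro ⟨A, hA, hP⟩
      exact ⟨F.equivFin ⟨A, hA⟩, by simpa using hP⟩
    · rintro ⟨i, hi⟩
      exact ⟨_, (F.equivFin.symm i).2, hi⟩
end

section
/- Let m, n be positive integers, let l_1,...,l_n ∈ ℤ^{2m}, and let z ∈ ℂ^n. Suppose there exists a subset P ⊆ I_z of cardinality 2m+1 such that the family (l_p)_{p ∈ P} affinely spans ℝ^{2m}. Then the subgroup { t ∈ (ℂ^*)^{2m} : X^{l_i}(t) = X^{l_j}(t) for all i, j ∈ I_z } of (ℂ^*)^{2m} is finite. -/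
/-!
Fix `p₀ ∈ P`.  The `2m` differences `l_p - l_{p₀}`, `p ∈ P \ {p₀}`, span `ℝ^{2m}`, so the integer
square matrix `A` having them as rows has nonzero determinant (`det_ne_zero_of_span_rows`).  If `t`
lies in the subgroup, then `X^a(t) = 1` for every row `a` of `A`, hence for every integer combination
of rows.  Since `adj(A) * A = det(A) • 1`, the vectors `det(A) • e_k` are such combinations, which
gives `t_k ^ det(A) = 1` for all `k` (`zpow_det_eq_one`).  Each coordinate of `t` is therefore one of
the finitely many roots of unity of order dividing `|det A|`.
-/

/-- The character of the torus `(ℂ*)^N` attached to `l ∈ ℤ^N`. -/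
def torusChar {N : ℕ} (l : Fin N → ℤ) (t : Fin N → ℂˣ) : ℂˣ :=
  ∏ i, t i ^ l i

/-- The map `l ↦ X^l(t)` as a homomorphism from `ℤ^N` to the additively written group `ℂ*`. -/
def torusCharHom {N : ℕ} (t : Fin N → ℂˣ) : (Fin N → ℤ) →+ Additive ℂˣ where
  toFun l := Additive.ofMul (torusChar l t)
  map_zero' := by simp [torusChar]
  map_add' a b := by
    rw [← ofMul_mul]
    simp [torusChar, zpow_add, Finset.prod_mul_distrib]

lemma torusChar_sub {N : ℕ} (a b : Fin N → ℤ) (t : Fin N → ℂˣ) :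
    torusChar (a - b) t = torusChar a t / torusChar b t :=
  map_sub (torusCharHom t) a b

lemma torusChar_single {N : ℕ} (k : Fin N) (d : ℤ) (t : Fin N → ℂˣ) :
    torusChar (Pi.single k d) t = t k ^ d := by
  unfold torusChar
  rw [Finset.prod_eq_single k]
  · simp
  · intro i _ hi
    simp [hi]
  · simp

lemma zpow_det_eq_one {N : ℕ} (A : Matrix (Fin N) (Fin N) ℤ) (t : Fin N → ℂˣ)
    (h : ∀ j, torusChar (A j) t = 1) (k : Fin N) : t k ^ A.det = 1 := by
  -- Row `k` of `adj(A) * A = det(A) • 1`.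
  have hrow : (Pi.single k A.det : Fin N → ℤ) = ∑ j, A.adjugate k j • A j := by
    ext i
    have := congrFun (congrFun A.adjugate_mul k) i
    simp only [Matrix.mul_apply, Matrix.smul_apply, Matrix.one_apply] at this
    simp only [Finset.sum_apply, Pi.smul_apply, smul_eq_mul, this, Pi.single_apply]
    by_cases hik : k = i
    · simp [hik]
    · simp [hik, Ne.symm hik]
  rw [← torusChar_single, hrow]
  have h' : ∀ j, torusCharHom t (A j) = 0 := h
  have : torusCharHom t (∑ j, A.adjugate k j • A j) = 0 := by
    simp only [map_sum, map_zsmul, h', smul_zero, Finset.sum_const_zero]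
  exact this

lemma det_ne_zero_of_span_rows {N : ℕ} (A : Matrix (Fin N) (Fin N) ℤ)
    (h : Submodule.span ℝ (Set.range fun j i => (A j i : ℝ)) = ⊤) : A.det ≠ 0 := by
  have hli : LinearIndependent ℝ (fun j i => (A j i : ℝ)) :=
    linearIndependent_of_top_le_span_of_card_eq_finrank h.ge (by simp)
  have hu : IsUnit (A.map (Int.castRingHom ℝ)) :=
    Matrix.linearIndependent_rows_iff_isUnit.mp hli
  have hd := ((Matrix.isUnit_iff_isUnit_det _).mp hu).ne_zero
  intro h0
  apply hd
  rw [← RingHom.mapMatrix_apply, ← RingHom.map_det, h0, map_zero]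

lemma finite_zpow_eq_one {d : ℤ} (hd : d ≠ 0) : {u : ℂˣ | u ^ d = 1}.Finite := by
  have : NeZero d.natAbs := ⟨Int.natAbs_ne_zero.mpr hd⟩
  refine Set.Finite.subset (s := (rootsOfUnity d.natAbs ℂ : Set ℂˣ))
    (inferInstanceAs (Finite (rootsOfUnity d.natAbs ℂ))) fun u hu => ?_
  exact (pow_natAbs_eq_one).mpr hu

/-- Let `m, n` be positive integers, `l_1, …, l_n ∈ ℤ^{2m}`, `z ∈ ℂ^n`.
Suppose there is a subset `P ⊆ I_z` of cardinality `2m + 1` such that the family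
`(l_p)_{p ∈ P}` affinely spans `ℝ^{2m}`.  Then the subgroup
`{ t ∈ (ℂ*)^{2m} : X^{l_i}(t) = X^{l_j}(t) for all i, j ∈ I_z }` is finite. -/
theorem statement9 (m n : ℕ) (hm : 0 < m) (hn : 0 < n)
    (l : Fin n → Fin (2 * m) → ℤ) (z : Fin n → ℂ)
    (P : Finset (Fin n)) (hPcard : P.card = 2 * m + 1)
    (hPz : ∀ p ∈ P, z p ≠ 0)
    (hspan :
      affineSpan ℝ ((fun p : Fin n => fun i : Fin (2 * m) => (l p i : ℝ)) '' ↑P) = ⊤) :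
    Set.Finite
      {t : Fin (2 * m) → ℂˣ |
        ∀ i j, z i ≠ 0 → z j ≠ 0 → torusChar (l i) t = torusChar (l j) t} := by
  obtain ⟨p₀, hp₀⟩ : P.Nonempty := Finset.card_pos.mp (by omega)
  have hcard : (P.erase p₀).card = 2 * m := by
    rw [Finset.card_erase_of_mem hp₀, hPcard, Nat.add_sub_cancel]
  let e := (P.erase p₀).equivFinOfCardEq hcard
  let A : Matrix (Fin (2 * m)) (Fin (2 * m)) ℤ := fun j => l (e.symm j) - l p₀
  have hA : Submodule.span ℝ (Set.range fun j i => (A j i : ℝ)) = ⊤ := by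
    have hv := AffineSubspace.vectorSpan_eq_top_of_affineSpan_eq_top ℝ _ _ hspan
    rw [vectorSpan_image_eq_span_vsub_set_right_ne ℝ _ (Finset.mem_coe.mpr hp₀)] at hv
    rw [← top_le_iff, ← hv]
    refine Submodule.span_mono ?_
    rintro _ ⟨_, ⟨p, ⟨hp, hne⟩, rfl⟩, rfl⟩
    refine ⟨e ⟨p, Finset.mem_erase.mpr ⟨hne, hp⟩⟩, ?_⟩
    ext i
    simp [A]
  have hdet := det_ne_zero_of_span_rows A hA
  refine (Set.Finite.pi fun _ : Fin (2 * m) => finite_zpow_eq_one hdet).subset fun t ht => ?_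
  refine fun k _ => zpow_det_eq_one A t (fun j => ?_) k
  have hj : z (e.symm j) ≠ 0 := hPz _ (Finset.mem_of_mem_erase (e.symm j).2)
  rw [torusChar_sub, ht _ _ hj (hPz p₀ hp₀), div_self']
end

section
/- Let F : ℂ^a → ℂ^n and G : ℂ^n → ℂ^b be ℂ-linear maps such that F(ℤ^a) ⊆ ℤ^n, G restricted to ℤ^n maps onto ℤ^b, and the sequence is exact at ℂ^n (the kernel of G equals the image of F). Let f : (ℂ^*)^a → (ℂ^*)^n and g : (ℂ^*)^n → (ℂ^*)^b be the group homomorphisms determined by f ∘ exp = exp ∘ F and g ∘ exp = exp ∘ G. Then g is surjective and the kernel of g equals the image of f. -/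
/-!
Since `exp` is surjective with kernel `2πi ℤ^N`, everything lifts to the linear maps. The map `G`
is surjective because its image contains the standard basis of `ℂ^b`, hence so is `g`. If
`g (exp z) = 1` then `G z = 2πi w` with `w` integral; writing `w = G v` with `v` integral,
`z - 2πi v` lies in `ker G = im F` and has the same exponential as `z`, so `exp z` lies in the
image of `f`. The reverse inclusion is `G ∘ F = 0`.
-/

/-- The componentwise exponential map `ℂ^N → (ℂ*)^N`, a surjective group homomorphism
from the additive group to the multiplicative group. -/
noncomputable def cexp (N : ℕ) (z : Fin N → ℂ) : Fin N → ℂˣ :=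
  fun i => Units.mk0 (Complex.exp (z i)) (Complex.exp_ne_zero _)

theorem cexp_surjective (N : ℕ) : Function.Surjective (cexp N) := by
  intro t
  refine ⟨fun i => Complex.log (t i), ?_⟩
  funext i
  ext
  simp [cexp, Complex.exp_log]

theorem cexp_zero (N : ℕ) : cexp N 0 = 1 := by
  funext i
  ext
  simp [cexp]

theorem cexp_eq_one {N : ℕ} {z : Fin N → ℂ} (h : cexp N z = 1) :
    ∃ w : Fin N → ℤ, z = (2 * Real.pi * Complex.I) • fun i => (w i : ℂ) := by
  have h1 : ∀ i, ∃ k : ℤ, z i = k * (2 * Real.pi * Complex.I) := fun i => by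
    rw [← Complex.exp_eq_one_iff]
    simpa [cexp] using congrArg Units.val (congrFun h i)
  choose w hw using h1
  refine ⟨w, funext fun i => ?_⟩
  simp [hw i, mul_comm]

theorem cexp_sub_period {N : ℕ} (z : Fin N → ℂ) (v : Fin N → ℤ) :
    cexp N (z - (2 * Real.pi * Complex.I) • fun i => (v i : ℂ)) = cexp N z := by
  funext i
  ext
  have h : Complex.exp (2 * Real.pi * Complex.I * v i) = 1 :=
    Complex.exp_eq_one_iff.2 ⟨v i, mul_comm _ _⟩
  simp [cexp, Complex.exp_sub, h]

/-- A linear map whose image contains every integral vector is surjective, as the standard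
basis vectors are integral. -/
theorem surjective_of_onto_int {n b : ℕ} (G : (Fin n → ℂ) →ₗ[ℂ] (Fin b → ℂ))
    (h : ∀ w : Fin b → ℤ, ∃ v : Fin n → ℤ, ∀ j, G (fun i => (v i : ℂ)) j = (w j : ℂ)) :
    Function.Surjective G := by
  intro y
  choose v hv using fun k : Fin b => h (Pi.single k 1)
  refine ⟨∑ k, y k • fun i => (v k i : ℂ), funext fun j => ?_⟩
  simp [map_sum, hv, Pi.single_apply]

/-- Let `F : ℂ^a → ℂ^n` and `G : ℂ^n → ℂ^b` be `ℂ`-linear maps such that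
`F(ℤ^a) ⊆ ℤ^n`, `G` restricted to `ℤ^n` maps onto `ℤ^b`, and `ker G = im F`.  Let
`f : (ℂ*)^a → (ℂ*)^n` and `g : (ℂ*)^n → (ℂ*)^b` be the group homomorphisms determined by
`f ∘ exp = exp ∘ F` and `g ∘ exp = exp ∘ G`.  Then `g` is surjective and `ker g = im f`. -/
theorem statement12 (a n b : ℕ)
    (F : (Fin a → ℂ) →ₗ[ℂ] (Fin n → ℂ)) (G : (Fin n → ℂ) →ₗ[ℂ] (Fin b → ℂ))
    (hF : ∀ v : Fin a → ℤ, ∀ j, ∃ k : ℤ, F (fun i => (v i : ℂ)) j = (k : ℂ))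
    (hGint : ∀ v : Fin n → ℤ, ∀ j, ∃ k : ℤ, G (fun i => (v i : ℂ)) j = (k : ℂ))
    (hGonto : ∀ w : Fin b → ℤ, ∃ v : Fin n → ℤ, ∀ j, G (fun i => (v i : ℂ)) j = (w j : ℂ))
    (hexact : LinearMap.ker G = LinearMap.range F)
    (f : (Fin a → ℂˣ) →* (Fin n → ℂˣ)) (g : (Fin n → ℂˣ) →* (Fin b → ℂˣ))
    (hf : ∀ z, f (cexp a z) = cexp n (F z))
    (hg : ∀ z, g (cexp n z) = cexp b (G z)) :
    Function.Surjective g ∧ MonoidHom.ker g = MonoidHom.range f := by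
  have hG : Function.Surjective G := surjective_of_onto_int G hGonto
  refine ⟨fun t => ?_, ?_⟩
  · obtain ⟨y, rfl⟩ := cexp_surjective b t
    obtain ⟨z, rfl⟩ := hG y
    exact ⟨cexp n z, hg z⟩
  · ext t
    rw [MonoidHom.mem_ker, MonoidHom.mem_range]
    constructor
    · intro ht
      obtain ⟨z, rfl⟩ := cexp_surjective n t
      rw [hg] at ht
      obtain ⟨w, hw⟩ := cexp_eq_one ht
      obtain ⟨v, hv⟩ := hGonto w
      have hker : z - (2 * Real.pi * Complex.I) • (fun i => (v i : ℂ)) ∈ LinearMap.ker G := by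
        rw [LinearMap.mem_ker, map_sub, map_smul, hw, funext hv, sub_self]
      rw [hexact] at hker
      obtain ⟨y, hy⟩ := hker
      exact ⟨cexp a y, by rw [hf, hy, cexp_sub_period]⟩
    · rintro ⟨s, rfl⟩
      obtain ⟨y, rfl⟩ := cexp_surjective a s
      have hGF : G (F y) = 0 := by
        rw [← LinearMap.mem_ker, hexact]
        exact ⟨y, rfl⟩
      rw [hf, hg, hGF, cexp_zero]
end

section
/- Let P be a pure simplicial complex of dimension d whose vertex set is exactly {1,...,v}, and suppose P is a pseudo-manifold. On the ground set {0,1,...,v+d+1}, define E_0 = { {0} ∪ ({1,...,v+d+1} \ F) : F a facet of P }. Then E_0 is a fundamental set of type (v+1, v+d+2) with exactly d+2 indispensable elements, E_0 is minimal for the SEU property, and the associated complex of E_0 is P. -/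
/-!
With `n = v + d + 2`, the member of `E0 v d P` attached to a facet `F` is simply the complement
of `F` in `{0, …, n - 1}` (`mem_E0`), so every claim about `E0` translates into one about facets.

* Complements reverse inclusion, so the associated complex consists of the subsets of facets,
  which is `P`. The indispensable elements are those lying in no facet, namely `0` and
  `v + 1, …, v + d + 1`.
* If `k` already lies in the complement of `F`, its only substitute is `k` itself, by cardinality.
  If `k ∈ F`, replacing `k'` by `k` in the complement of `F` amounts to replacing `k` by `k'` in
  `F` (`swap_compl`). Thus substitutes for `k` correspond to the facets other than `F` through the
  ridge `F \ {k}`, and the pseudo-manifold condition says that there is exactly one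
  (`exists_other_facet`).
* A subfamily with the SEU property is closed under passing to the facet on the other side of a
  ridge, since this other facet is the only possible substitute in `E0` (`seu_step`). As any two
  facets are joined by a chain through ridges, a nonempty such subfamily is all of `E0`.
-/

open Classical

/-- A finite pure simplicial complex `P` (with facets of cardinality `d + 1`) is a
pseudo-manifold: every ridge (face of cardinality `d`) is contained in exactly two facets,
and any two facets are joined by a chain of facets in which consecutive facets intersect
in a ridge. -/
def IsPseudoManifoldC (d : ℕ) (P : Finset (Finset ℕ)) : Prop :=
  (∀ Q ∈ P, Q.card = d → (P.filter fun σ => IsFacetOf P σ ∧ Q ⊆ σ).card = 2) ∧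
  ∀ σ τ, IsFacetOf P σ → IsFacetOf P τ →
    ∃ r : ℕ, ∃ c : Fin (r + 1) → Finset ℕ, c 0 = σ ∧ c (Fin.last r) = τ ∧
      (∀ i, IsFacetOf P (c i)) ∧
      ∀ i : Fin r, (c i.castSucc ∩ c i.succ) ∈ P ∧ (c i.castSucc ∩ c i.succ).card = d

/-- The fundamental set `E_0 = { {0} ∪ ({1, …, v+d+1} \ F) : F a facet of P }` on the
ground set `{0, 1, …, v+d+1}`. -/
noncomputable def E0 (v d : ℕ) (P : Finset (Finset ℕ)) : Finset (Finset ℕ) :=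
  (P.filter fun σ => IsFacetOf P σ).image fun F => insert 0 (Finset.Icc 1 (v + d + 1) \ F)

/-- Every face of a finite complex lies in a facet. -/
lemma exists_facet {P : Finset (Finset ℕ)} {σ : Finset ℕ} (h : σ ∈ P) :
    ∃ F, IsFacetOf P F ∧ σ ⊆ F := by
  obtain ⟨F, hF, hm⟩ := P.exists_le_maximal h
  exact ⟨F, ⟨hm.1, fun τ hτ h' => Finset.Subset.antisymm (hm.2 hτ h') h'⟩, hF⟩

/-- The members of `E0` are the complements of the facets in the ground set. -/
lemma mem_E0 {v d : ℕ} {P : Finset (Finset ℕ)} (hground : ∀ σ ∈ P, σ ⊆ Finset.Icc 1 v)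
    {A : Finset ℕ} :
    A ∈ E0 v d P ↔ ∃ F, IsFacetOf P F ∧ Finset.range (v + d + 2) \ F = A := by
  have key : ∀ F, IsFacetOf P F →
      insert 0 (Finset.Icc 1 (v + d + 1) \ F) = Finset.range (v + d + 2) \ F := by
    intro F hF
    ext x
    have := @hground F hF.1 x
    simp only [Finset.mem_insert, Finset.mem_sdiff, Finset.mem_Icc, Finset.mem_range] at this ⊢
    by_cases hx : x ∈ F
    · have := this hx
      simp only [hx, not_true_eq_false, and_false, or_false, iff_false]
      omega
    · simp only [hx, not_false_eq_true, and_true]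
      omega
  simp only [E0, Finset.mem_image, Finset.mem_filter]
  constructor
  · rintro ⟨F, ⟨-, hF⟩, rfl⟩
    exact ⟨F, hF, (key F hF).symm⟩
  · rintro ⟨F, hF, rfl⟩
    exact ⟨F, ⟨hF.1, hF⟩, key F hF⟩

lemma ground_range {v d : ℕ} {P : Finset (Finset ℕ)} (hground : ∀ σ ∈ P, σ ⊆ Finset.Icc 1 v)
    {F : Finset ℕ} (hF : F ∈ P) : F ⊆ Finset.range (v + d + 2) := by
  intro x hx
  have := Finset.mem_Icc.1 (hground F hF hx)
  exact Finset.mem_range.2 (by omega)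

lemma compl_mem_E0 {v d : ℕ} {P : Finset (Finset ℕ)} (hground : ∀ σ ∈ P, σ ⊆ Finset.Icc 1 v)
    {X : Finset ℕ} (hX : X ⊆ Finset.range (v + d + 2)) :
    Finset.range (v + d + 2) \ X ∈ E0 v d P ↔ IsFacetOf P X := by
  rw [mem_E0 hground]
  constructor
  · rintro ⟨F, hF, h⟩
    have := congrArg (Finset.range (v + d + 2) \ ·) h
    simp only [Finset.sdiff_sdiff_eq_self hX,
      Finset.sdiff_sdiff_eq_self (ground_range hground hF.1)] at this
    exact this ▸ hF
  · exact fun h => ⟨X, h, rfl⟩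

/-- Substituting `k` for `k'` in the complement of `F` substitutes `k'` for `k` in `F`. -/
lemma swap_compl {R F : Finset ℕ} {k k' : ℕ} (hF : F ⊆ R) (hk : k ∈ F) (hk' : k' ∉ F) :
    (R \ F) \ {k'} ∪ {k} = R \ insert k' (F.erase k) := by
  have hkR := hF hk
  ext x
  simp only [Finset.mem_union, Finset.mem_sdiff, Finset.mem_singleton, Finset.mem_insert,
    Finset.mem_erase]
  grind

/-- Through each ridge `F \ {k}` of a facet `F` there is exactly one further facet. -/
lemma exists_other_facet {d : ℕ} {P : Finset (Finset ℕ)}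
    (hdc : ∀ σ ∈ P, ∀ τ ⊆ σ, τ ∈ P) (hpure : ∀ σ, IsFacetOf P σ → σ.card = d + 1)
    (hpm : IsPseudoManifoldC d P) {F : Finset ℕ} (hF : IsFacetOf P F) {k : ℕ} (hk : k ∈ F) :
    ∃ G, IsFacetOf P G ∧ G ≠ F ∧ F.erase k ⊆ G ∧
      ∀ H, IsFacetOf P H → F.erase k ⊆ H → H ≠ F → H = G := by
  have hc := hpm.1 (F.erase k) (hdc F hF.1 _ (Finset.erase_subset _ _))
    (by rw [Finset.card_erase_of_mem hk, hpure F hF]; rfl)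
  obtain ⟨A, B, hAB, hs⟩ := Finset.card_eq_two.1 hc
  have hm : ∀ H, (IsFacetOf P H ∧ F.erase k ⊆ H) ↔ H = A ∨ H = B := by
    intro H
    have := Finset.ext_iff.1 hs H
    simp only [Finset.mem_filter, Finset.mem_insert, Finset.mem_singleton] at this
    rw [← this]
    exact ⟨fun h => ⟨h.1.1, h⟩, fun h => h.2⟩
  have hA := (hm A).2 (Or.inl rfl)
  have hB := (hm B).2 (Or.inr rfl)
  rcases (hm F).1 ⟨hF, Finset.erase_subset _ _⟩ with rfl | rfl
  · exact ⟨B, hB.1, hAB.symm, hB.2, fun H h1 h2 h3 => ((hm H).1 ⟨h1, h2⟩).resolve_left h3⟩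
  · exact ⟨A, hA.1, hAB, hA.2, fun H h1 h2 h3 => ((hm H).1 ⟨h1, h2⟩).resolve_right h3⟩

lemma eq_insert_of_ridge {d : ℕ} {F G : Finset ℕ} {k : ℕ} (hF : F.card = d + 1)
    (hG : G.card = d + 1) (hk : k ∈ F) (hne : G ≠ F) (hs : F.erase k ⊆ G) :
    ∃ k' ∉ F, insert k' (F.erase k) = G := by
  obtain ⟨k', h1, h2⟩ := Finset.exists_eq_insert_iff.2
    ⟨hs, by rw [Finset.card_erase_of_mem hk, hF, hG]; rfl⟩
  refine ⟨k', fun h => ?_, h2⟩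
  have : k' = k := by
    by_contra hkk
    exact h1 (Finset.mem_erase.2 ⟨hkk, h⟩)
  subst this
  exact hne (by rw [← h2, Finset.insert_erase hk])

lemma seu_E0 {v d : ℕ} {P : Finset (Finset ℕ)}
    (hdc : ∀ σ ∈ P, ∀ τ ⊆ σ, τ ∈ P) (hground : ∀ σ ∈ P, σ ⊆ Finset.Icc 1 v)
    (hpure : ∀ σ, IsFacetOf P σ → σ.card = d + 1) (hpm : IsPseudoManifoldC d P)
    (hcard : ∀ A ∈ E0 v d P, A.card = v + 1) :
    SEU (v + d + 2) (E0 v d P) := by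
  intro A hA k hk
  obtain ⟨F, hF, rfl⟩ := (mem_E0 hground).1 hA
  have hFR := ground_range (d := d) hground hF.1
  by_cases hkF : k ∈ F
  · obtain ⟨G, hG, hGF, hsub, huniq⟩ := exists_other_facet hdc hpure hpm hF hkF
    obtain ⟨k', hk', rfl⟩ := eq_insert_of_ridge (hpure F hF) (hpure G hG) hkF hGF hsub
    have hk'R : k' ∈ Finset.range (v + d + 2) :=
      ground_range hground hG.1 (Finset.mem_insert_self _ _)
    refine ⟨k', ⟨Finset.mem_sdiff.2 ⟨hk'R, hk'⟩, ?_⟩, ?_⟩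
    · rw [swap_compl hFR hkF hk']
      exact (compl_mem_E0 hground (ground_range hground hG.1)).2 hG
    · rintro y ⟨hy, hyE⟩
      obtain ⟨hyR, hyF⟩ := Finset.mem_sdiff.1 hy
      rw [swap_compl hFR hkF hyF] at hyE
      have hH := (compl_mem_E0 hground (Finset.insert_subset hyR
        ((Finset.erase_subset _ _).trans hFR))).1 hyE
      have he := huniq _ hH (Finset.subset_insert _ _)
        (fun h => hyF (h ▸ Finset.mem_insert_self _ _))
      have : y ∈ insert k' (F.erase k) := he ▸ Finset.mem_insert_self _ _
      rcases Finset.mem_insert.1 this with h | h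
      · exact h
      · exact absurd (Finset.mem_of_mem_erase h) hyF
  · have hkA : k ∈ Finset.range (v + d + 2) \ F := Finset.mem_sdiff.2 ⟨hk, hkF⟩
    generalize Finset.range (v + d + 2) \ F = A at hA hkA
    refine ⟨k, ⟨hkA, ?_⟩, ?_⟩
    · rwa [Finset.sdiff_union_of_subset (Finset.singleton_subset_iff.2 hkA)]
    · rintro y ⟨hy, hyE⟩
      by_contra hne
      have he : A \ {y} ∪ {k} = A.erase y := by
        ext x
        simp only [Finset.mem_union, Finset.mem_sdiff, Finset.mem_singleton, Finset.mem_erase]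
        grind
      have h1 := hcard _ hyE
      have h2 := hcard _ hA
      rw [he, Finset.card_erase_of_mem hy] at h1
      omega

/-- A subfamily of `E0` with the SEU property is closed under crossing a ridge. -/
lemma seu_step {v d : ℕ} {P : Finset (Finset ℕ)}
    (hdc : ∀ σ ∈ P, ∀ τ ⊆ σ, τ ∈ P) (hground : ∀ σ ∈ P, σ ⊆ Finset.Icc 1 v)
    (hpure : ∀ σ, IsFacetOf P σ → σ.card = d + 1) (hpm : IsPseudoManifoldC d P)
    {E' : Finset (Finset ℕ)} (hE' : E' ⊆ E0 v d P) (hseu : SEU (v + d + 2) E')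
    {F G : Finset ℕ} (hF : IsFacetOf P F) (hG : IsFacetOf P G) (hFG : (F ∩ G).card = d)
    (hmem : Finset.range (v + d + 2) \ F ∈ E') : Finset.range (v + d + 2) \ G ∈ E' := by
  have hFR := ground_range (d := d) hground hF.1
  have hGF : G ≠ F := by
    rintro rfl
    rw [Finset.inter_self, hpure G hG] at hFG
    omega
  obtain ⟨k, hk, hins⟩ := Finset.exists_eq_insert_iff.2
    ⟨(Finset.inter_subset_left : F ∩ G ⊆ F), by rw [hFG, hpure F hF]⟩
  have hkF : k ∈ F := hins ▸ Finset.mem_insert_self _ _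
  have her : F.erase k = F ∩ G := by
    conv_lhs => rw [← hins]
    exact Finset.erase_insert hk
  obtain ⟨B, -, -, -, huniq⟩ := exists_other_facet hdc hpure hpm hF hkF
  obtain ⟨k', ⟨hk', hk'E⟩, -⟩ := hseu _ hmem k (hFR hkF)
  obtain ⟨hk'R, hk'F⟩ := Finset.mem_sdiff.1 hk'
  rw [swap_compl hFR hkF hk'F] at hk'E
  have hH := (compl_mem_E0 hground (Finset.insert_subset hk'R
    ((Finset.erase_subset _ _).trans hFR))).1 (hE' hk'E)
  have h1 := huniq _ hH (Finset.subset_insert _ _)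
    (fun h => hk'F (h ▸ Finset.mem_insert_self _ _))
  have h2 := huniq G hG (her ▸ Finset.inter_subset_right) hGF
  rw [h2, ← h1]
  exact hk'E

/-- Let `P` be a pure simplicial complex of dimension `d` whose vertex
set is exactly `{1, …, v}`, and suppose `P` is a pseudo-manifold.  On the ground set
`{0, 1, …, v+d+1}` define `E_0 = { {0} ∪ ({1, …, v+d+1} \ F) : F a facet of P }`.  Then
`E_0` is a fundamental set of type `(v+1, v+d+2)` with exactly `d+2` indispensable
elements, `E_0` is minimal for the SEU property, and the associated complex of `E_0`
is `P`. -/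
theorem statement15 (v d : ℕ) (P : Finset (Finset ℕ))
    (hne : P.Nonempty)
    (hdc : ∀ σ ∈ P, ∀ τ ⊆ σ, τ ∈ P)
    (hground : ∀ σ ∈ P, σ ⊆ Finset.Icc 1 v)
    (hvert : ∀ j, ({j} : Finset ℕ) ∈ P ↔ j ∈ Finset.Icc 1 v)
    (hpure : ∀ σ, IsFacetOf P σ → σ.card = d + 1)
    (hpm : IsPseudoManifoldC d P) :
    IsFundamentalSet (v + 1) (v + d + 2) (E0 v d P) ∧
    ((Finset.range (v + d + 2)).filter fun j => ∀ Q ∈ E0 v d P, j ∈ Q).card = d + 2 ∧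
    MinimalSEU (v + d + 2) (E0 v d P) ∧
    ∀ σ, σ ∈ AssocComplex (v + d + 2) (E0 v d P) ↔ σ ∈ P := by
  have hcard : ∀ A ∈ E0 v d P, A.card = v + 1 := by
    intro A hA
    obtain ⟨F, hF, rfl⟩ := (mem_E0 hground).1 hA
    rw [Finset.card_sdiff_of_subset (ground_range hground hF.1), hpure F hF, Finset.card_range]
    omega
  refine ⟨⟨?_, fun A hA => ⟨?_, hcard A hA⟩⟩, ?_,
    ⟨seu_E0 hdc hground hpure hpm hcard, ?_⟩, ?_⟩
  · obtain ⟨σ, hσ⟩ := hne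
    obtain ⟨F, hF, -⟩ := exists_facet hσ
    exact ⟨_, (mem_E0 hground).2 ⟨F, hF, rfl⟩⟩
  · obtain ⟨F, hF, rfl⟩ := (mem_E0 hground).1 hA
    exact Finset.sdiff_subset
  · -- The indispensable elements are the points of the ground set that are not vertices of `P`.
    have h : ((Finset.range (v + d + 2)).filter fun j => ∀ Q ∈ E0 v d P, j ∈ Q) =
        Finset.range (v + d + 2) \ Finset.Icc 1 v := by
      ext j
      rw [Finset.mem_filter, Finset.mem_sdiff]
      refine and_congr_right fun hj => ⟨fun h hjv => ?_, fun h Q hQ => ?_⟩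
      · obtain ⟨F, hF, hjF⟩ := exists_facet ((hvert j).2 hjv)
        exact (Finset.mem_sdiff.1 (h _ ((mem_E0 hground).2 ⟨F, hF, rfl⟩))).2
          (Finset.singleton_subset_iff.1 hjF)
      · obtain ⟨F, hF, rfl⟩ := (mem_E0 hground).1 hQ
        exact Finset.mem_sdiff.2 ⟨hj, fun hjF => h (hground F hF.1 hjF)⟩
    have hsub : Finset.Icc 1 v ⊆ Finset.range (v + d + 2) := by
      intro x hx
      have := Finset.mem_Icc.1 hx
      exact Finset.mem_range.2 (by omega)
    rw [h, Finset.card_sdiff_of_subset hsub, Finset.card_range, Nat.card_Icc]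
    omega
  · rintro E' hE' ⟨A, hA⟩ hseu
    obtain ⟨F, hF, rfl⟩ := (mem_E0 hground).1 (hE'.1 hA)
    refine hE'.2 fun B hB => ?_
    obtain ⟨G, hG, rfl⟩ := (mem_E0 hground).1 hB
    obtain ⟨r, c, h0, hlast, hfac, hadj⟩ := hpm.2 F G hF hG
    have hall : ∀ i, Finset.range (v + d + 2) \ c i ∈ E' := by
      intro i
      induction i using Fin.induction with
      | zero => rwa [h0]
      | succ i ih =>
        exact seu_step hdc hground hpure hpm hE'.1 hseu (hfac _) (hfac _) (hadj i).2 ih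
    exact hlast ▸ hall (Fin.last r)
  · intro σ
    constructor
    · rintro ⟨hσ, A, hA, hAσ⟩
      obtain ⟨F, hF, rfl⟩ := (mem_E0 hground).1 hA
      refine hdc F hF.1 σ fun x hx => ?_
      by_contra hxF
      exact (Finset.mem_sdiff.1 (hAσ (Finset.mem_sdiff.2 ⟨hσ hx, hxF⟩))).2 hx
    · intro hσ
      obtain ⟨F, hF, hσF⟩ := exists_facet hσ
      exact ⟨ground_range hground hσ, _, (mem_E0 hground).2 ⟨F, hF, rfl⟩,
        Finset.sdiff_subset_sdiff subset_rfl hσF⟩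
end
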